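/- Let A : ℝ² → ℝ^{n×n} be a C² family of real symmetric matrices and α ∈ ℝ² a point such that the two smallest eigenvalues satisfy λ₂(α) < λ₃(α) (the pair {λ₁, λ₂} is separated from the rest of the spectrum at α). Then there exist an open neighborhood Ω ⊂ ℝ² of α and a C² orthogonal-matrix-valued function M : Ω → ℝ^{n×n} such that M(r)ᵀ A(r) M(r) = B(r) ⊕ Λ(r) for all r ∈ Ω, where B ∈ C²(Ω, ℝ^{2×2}) is symmetric with eigenvalues λ₁(r), λ₂(r), and Λ ∈ C²(Ω, ℝ^{(n−2)×(n−2)}) is symmetric with eigenvalues λ₃(r), …, λₙ(r). -/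

import Mathlib

noncomputable section
open Matrix

/-- Partial derivative in the `x` direction. -/
def pdx {E : Type*} [NormedAddCommGroup E] [NormedSpace ℝ E] (f : ℝ × ℝ → E) (r : ℝ × ℝ) : E :=
  fderiv ℝ f r (1, 0)

/-- Partial derivative in the `y` direction. -/
def pdy {E : Type*} [NormedAddCommGroup E] [NormedSpace ℝ E] (f : ℝ × ℝ → E) (r : ℝ × ℝ) : E :=
  fderiv ℝ f r (0, 1)

/-- The target function `F(S) = (S₁₁ − S₂₂, 2 S₁₂)` of a 2×2 matrix family. -/
def Ftar (S : ℝ × ℝ → Matrix (Fin 2) (Fin 2) ℝ) (r : ℝ × ℝ) : ℝ × ℝ :=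
  (S r 0 0 - S r 1 1, 2 * S r 0 1)

/-- The Jacobian `J_r(S) = D_r F(S)` of the target function. -/
def Jmat (S : ℝ × ℝ → Matrix (Fin 2) (Fin 2) ℝ) (r : ℝ × ℝ) : Matrix (Fin 2) (Fin 2) ℝ :=
  !![pdx (fun p => S p 0 0 - S p 1 1) r, pdy (fun p => S p 0 0 - S p 1 1) r;
     pdx (fun p => 2 * S p 0 1) r, pdy (fun p => 2 * S p 0 1) r]

/-- Action of a 2×2 matrix on `ℝ × ℝ`. -/
def mulVec2 (M : Matrix (Fin 2) (Fin 2) ℝ) (v : ℝ × ℝ) : ℝ × ℝ :=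
  (M 0 0 * v.1 + M 0 1 * v.2, M 1 0 * v.1 + M 1 1 * v.2)

/-- The family `A` expressed in the constant basis `v₁, v₂`:
the 2×2 matrix `Ã(r) = (⟨vᵢ, A(r) vⱼ⟩)`. -/
def tildeA {n : ℕ} (A : ℝ × ℝ → Matrix (Fin n) (Fin n) ℝ) (v₁ v₂ : Fin n → ℝ) :
    ℝ × ℝ → Matrix (Fin 2) (Fin 2) ℝ := fun r =>
  !![v₁ ⬝ᵥ (A r).mulVec v₁, v₁ ⬝ᵥ (A r).mulVec v₂;
     v₂ ⬝ᵥ (A r).mulVec v₁, v₂ ⬝ᵥ (A r).mulVec v₂]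

/-- The discriminant of a 2×2 symmetric matrix family. -/
def discB (B : ℝ × ℝ → Matrix (Fin 2) (Fin 2) ℝ) (r : ℝ × ℝ) : ℝ :=
  (B r 0 0 - B r 1 1) ^ 2 + 4 * (B r 0 1) ^ 2

/-- The Hessian (matrix of second partial derivatives) of `g : ℝ² → ℝ`. -/
def Hess2 (g : ℝ × ℝ → ℝ) (α : ℝ × ℝ) : Matrix (Fin 2) (Fin 2) ℝ :=
  !![pdx (fun r => pdx g r) α, pdx (fun r => pdy g r) α;
     pdy (fun r => pdx g r) α, pdy (fun r => pdy g r) α]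

/-- The upper-left 2×2 block of an `n×n` matrix family (`2 < n`). -/
def topBlock {n : ℕ} (hn : 2 < n) (C : ℝ × ℝ → Matrix (Fin n) (Fin n) ℝ) :
    ℝ × ℝ → Matrix (Fin 2) (Fin 2) ℝ := fun r =>
  !![C r ⟨0, by omega⟩ ⟨0, by omega⟩, C r ⟨0, by omega⟩ ⟨1, by omega⟩;
     C r ⟨1, by omega⟩ ⟨0, by omega⟩, C r ⟨1, by omega⟩ ⟨1, by omega⟩]

section BlockDiagonalization

attribute [local instance] Matrix.linftyOpNormedAddCommGroup Matrix.linftyOpNormedSpace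
  Matrix.linftyOpNormedRing Matrix.linftyOpNormedAlgebra

/-- A matrix-valued map is `C^k` if and only if all its entries are. -/
lemma Matrix.contDiffAt_iff_entries {ι κ : Type*} [Fintype ι] [Fintype κ] {E : Type*}
    [NormedAddCommGroup E] [NormedSpace ℝ E] {k : WithTop ℕ∞} {f : E → Matrix ι κ ℝ} {x : E} :
    ContDiffAt ℝ k f x ↔ ∀ i j, ContDiffAt ℝ k (fun r => f r i j) x := by
  rw [← (Matrix.ofLinearEquiv ℝ (m := ι) (n := κ) (α := ℝ)).symm.toContinuousLinearEquiv
    |>.comp_contDiffAt_iff, contDiffAt_pi]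
  simp_rw [contDiffAt_pi]
  rfl

variable {ι κ : Type*} [Fintype ι] [Fintype κ] [DecidableEq ι] [DecidableEq κ]

/-- The skew-symmetric matrix `[[0, -Xᵀ], [X, 0]]`, as a linear function of `X`. -/
def skewBlock (ι κ : Type*) [Fintype ι] [Fintype κ] [DecidableEq ι] [DecidableEq κ] :
    Matrix κ ι ℝ →L[ℝ] Matrix (ι ⊕ κ) (ι ⊕ κ) ℝ :=
  LinearMap.toContinuousLinearMap
    { toFun := fun X => fromBlocks 0 (-Xᵀ) X 0
      map_add' := fun X Y => by simp [fromBlocks_add, add_comm]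
      map_smul' := fun c X => by simp [fromBlocks_smul] }

lemma skewBlock_apply (X : Matrix κ ι ℝ) : skewBlock ι κ X = fromBlocks 0 (-Xᵀ) X 0 := rfl

lemma transpose_exp_skewBlock (X : Matrix κ ι ℝ) :
    (NormedSpace.exp (skewBlock ι κ X))ᵀ = NormedSpace.exp (-skewBlock ι κ X) := by
  rw [← Matrix.exp_transpose]
  congr 1
  simp [skewBlock_apply, fromBlocks_transpose, fromBlocks_neg]

lemma transpose_exp_skewBlock_mul_self (X : Matrix κ ι ℝ) :
    (NormedSpace.exp (skewBlock ι κ X))ᵀ * NormedSpace.exp (skewBlock ι κ X) = 1 := by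
  rw [transpose_exp_skewBlock,
    ← Matrix.exp_add_of_commute _ _ (Commute.refl (skewBlock ι κ X)).neg_left]
  simp

/-- The lower left block of a matrix, as a continuous linear map. -/
def lowerLeft (ι κ : Type*) [Fintype ι] [Fintype κ] [DecidableEq ι] [DecidableEq κ] :
    Matrix (ι ⊕ κ) (ι ⊕ κ) ℝ →L[ℝ] Matrix κ ι ℝ :=
  LinearMap.toContinuousLinearMap
    { toFun := fun N => N.toBlocks₂₁
      map_add' := fun _ _ => rfl
      map_smul' := fun _ _ => rfl }

lemma lowerLeft_apply (N : Matrix (ι ⊕ κ) (ι ⊕ κ) ℝ) : lowerLeft ι κ N = N.toBlocks₂₁ := rfl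

lemma contDiff_matrix_exp {k : WithTop ℕ∞} :
    ContDiff ℝ k (NormedSpace.exp : Matrix ι ι ℝ → Matrix ι ι ℝ) :=
  contDiff_iff_contDiffAt.2 fun x => (NormedSpace.exp_analytic (𝕂 := ℝ) x).contDiffAt

/-- The derivative at `X = 0` of the lower left block of `exp(-K) N exp(K)`, where `K` is the
skew-symmetric matrix with lower left block `X`. -/
lemma hasFDerivAt_lowerLeft_exp_conj (N : Matrix (ι ⊕ κ) (ι ⊕ κ) ℝ) :
    ∃ D : Matrix κ ι ℝ →L[ℝ] Matrix κ ι ℝ,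
      (∀ X, D X = (N * skewBlock ι κ X - skewBlock ι κ X * N).toBlocks₂₁) ∧
      HasFDerivAt (fun X => lowerLeft ι κ (NormedSpace.exp (-skewBlock ι κ X) * N *
        NormedSpace.exp (skewBlock ι κ X))) D 0 := by
  have hexp := hasFDerivAt_exp_zero (𝕂 := ℝ) (𝔸 := Matrix (ι ⊕ κ) (ι ⊕ κ) ℝ)
  have hpos : HasFDerivAt (fun X => NormedSpace.exp (skewBlock ι κ X)) (skewBlock ι κ) 0 := by
    have h : HasFDerivAt NormedSpace.exp (1 : Matrix (ι ⊕ κ) (ι ⊕ κ) ℝ →L[ℝ] _)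
      (skewBlock ι κ 0) := by rw [map_zero]; exact hexp
    exact h.comp 0 (skewBlock ι κ).hasFDerivAt
  have hneg : HasFDerivAt (fun X => NormedSpace.exp (-skewBlock ι κ X)) (-skewBlock ι κ) 0 := by
    have h : HasFDerivAt NormedSpace.exp (1 : Matrix (ι ⊕ κ) (ι ⊕ κ) ℝ →L[ℝ] _)
      ((-skewBlock ι κ) 0) := by rw [map_zero]; exact hexp
    exact h.comp 0 (-skewBlock ι κ).hasFDerivAt
  refine ⟨_, fun X => ?_, (lowerLeft ι κ).hasFDerivAt.comp 0 ((hneg.mul_const' N).mul' hpos)⟩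
  change lowerLeft ι κ (NormedSpace.exp (-skewBlock ι κ 0) * N * skewBlock ι κ X +
    -skewBlock ι κ X * N * NormedSpace.exp (skewBlock ι κ 0)) = _
  rw [← lowerLeft_apply]
  simp [sub_eq_add_neg]

/-- Block diagonalization of a `C²` family of matrices near a point where the matrix is diagonal
and the diagonal entries of the two blocks are distinct. -/
lemma exists_contDiffAt_orthogonal_toBlocks₂₁_eq_zero {E : Type*} [NormedAddCommGroup E]
    [NormedSpace ℝ E] [CompleteSpace E] {A : E → Matrix (ι ⊕ κ) (ι ⊕ κ) ℝ} {x : E}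
    (hA : ∀ i j, ContDiffAt ℝ 2 (fun r => A r i j) x) {a : ι → ℝ} {b : κ → ℝ}
    (hx : A x = fromBlocks (diagonal a) 0 0 (diagonal b)) (hab : ∀ i j, a i ≠ b j) :
    ∃ M : E → Matrix (ι ⊕ κ) (ι ⊕ κ) ℝ, (∀ i j, ContDiffAt ℝ 2 (fun r => M r i j) x) ∧
      M x = 1 ∧ (∀ r, (M r)ᵀ * M r = 1) ∧
      ∀ᶠ r in nhds x, ((M r)ᵀ * A r * M r).toBlocks₂₁ = 0 := by
  set f : E × Matrix κ ι ℝ → Matrix κ ι ℝ := fun p =>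
    lowerLeft ι κ (NormedSpace.exp (-skewBlock ι κ p.2) * A p.1 *
      NormedSpace.exp (skewBlock ι κ p.2)) with hf
  have hA' : ContDiffAt ℝ 2 A x := Matrix.contDiffAt_iff_entries.2 hA
  have hfc : ContDiffAt ℝ 2 f (x, 0) := by
    have hexp : ContDiff ℝ 2
      (NormedSpace.exp : Matrix (ι ⊕ κ) (ι ⊕ κ) ℝ → Matrix (ι ⊕ κ) (ι ⊕ κ) ℝ) :=
      contDiff_matrix_exp
    have hneg : ContDiff ℝ 2 fun p : E × Matrix κ ι ℝ =>
        NormedSpace.exp (-skewBlock ι κ p.2) :=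
      hexp.comp ((skewBlock ι κ).contDiff.comp contDiff_snd).neg
    have hpos : ContDiff ℝ 2 fun p : E × Matrix κ ι ℝ => NormedSpace.exp (skewBlock ι κ p.2) :=
      hexp.comp ((skewBlock ι κ).contDiff.comp contDiff_snd)
    have hAf : ContDiffAt ℝ 2 (fun p : E × Matrix κ ι ℝ => A p.1) (x, 0) :=
      ContDiffAt.comp (x, (0 : Matrix κ ι ℝ)) hA' contDiffAt_fst
    exact (lowerLeft ι κ).contDiff.contDiffAt.comp _
      ((hneg.contDiffAt.mul hAf).mul hpos.contDiffAt)
  obtain ⟨D, hD, hderiv⟩ := hasFDerivAt_lowerLeft_exp_conj (A x)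
  have hDf : fderiv ℝ f (x, 0) ∘L .inr ℝ E (Matrix κ ι ℝ) = D := by
    have h := (hfc.differentiableAt (by norm_num)).hasFDerivAt.comp (0 : Matrix κ ι ℝ)
      (hasFDerivAt_prodMk_right x (0 : Matrix κ ι ℝ))
    exact h.unique hderiv
  have hDinj : Function.Injective D.toLinearMap := by
    rw [← LinearMap.ker_eq_bot, LinearMap.ker_eq_bot']
    intro X hX
    ext j i
    have h := congrFun (congrFun ((hD X).symm.trans hX) j) i
    rw [hx, skewBlock_apply] at h
    simp [toBlocks₂₁] at h
    have hne : b j - a i ≠ 0 := sub_ne_zero.2 (hab i j).symm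
    have : (b j - a i) * X j i = 0 := by linarith
    exact (mul_eq_zero.1 this).resolve_left hne
  have hinv : (fderiv ℝ f (x, 0) ∘L .inr ℝ E (Matrix κ ι ℝ)).IsInvertible := by
    rw [hDf]
    exact ⟨(LinearEquiv.ofInjectiveEndo D.toLinearMap hDinj).toContinuousLinearEquiv, by ext; rfl⟩
  set ψ := hfc.implicitFunction two_ne_zero hinv
  have hψx : ψ x = 0 := hfc.implicitFunction_apply_self two_ne_zero hinv
  have hψc : ContDiffAt ℝ 2 ψ x := hfc.contDiffAt_implicitFunction two_ne_zero hinv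
  refine ⟨fun r => NormedSpace.exp (skewBlock ι κ (ψ r)), ?_, by simp [hψx],
    fun r => transpose_exp_skewBlock_mul_self _, ?_⟩
  · exact Matrix.contDiffAt_iff_entries.1 (contDiff_matrix_exp.contDiffAt.comp x
      ((skewBlock ι κ).contDiff.contDiffAt.comp x hψc))
  · filter_upwards [hfc.eventually_apply_implicitFunction two_ne_zero hinv] with r hr
    rw [transpose_exp_skewBlock, ← lowerLeft_apply]
    refine hr.trans ?_
    simp [hf, hx, lowerLeft_apply]

end BlockDiagonalization

/-- Two monotone tuples with the same monic polynomial are equal. -/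
lemma eq_of_monotone_of_prod_X_sub_C_eq {n : ℕ} {f g : Fin n → ℝ} (hf : Monotone f)
    (hg : Monotone g)
    (h : ∏ i, (Polynomial.X - Polynomial.C (f i)) = ∏ i, (Polynomial.X - Polynomial.C (g i))) :
    f = g := by
  have key : ∀ u : Fin n → ℝ, (∏ i, (Polynomial.X - Polynomial.C (u i))).roots =
      (List.ofFn u : Multiset ℝ) := fun u => by
    rw [← Polynomial.roots_multiset_prod_X_sub_C (List.ofFn u : Multiset ℝ)]
    simp [List.map_ofFn, List.prod_ofFn]
  have hp : (List.ofFn f).Perm (List.ofFn g) := by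
    rw [← Multiset.coe_eq_coe, ← key, ← key, h]
  exact List.ofFn_injective (hp.eq_of_pairwise (fun _ _ _ _ => le_antisymm)
    (List.pairwise_ofFn.2 fun _ _ hij => hf hij.le) (List.pairwise_ofFn.2 fun _ _ hij => hg hij.le))

section Spectral

variable {ι : Type*} [Fintype ι] [DecidableEq ι]

lemma charpoly_orthogonal_conj {W : Matrix ι ι ℝ} (hW : Wᵀ * W = 1) (S : Matrix ι ι ℝ) :
    (W * S * Wᵀ).charpoly = S.charpoly := by
  rw [Matrix.charpoly_mul_comm, ← Matrix.mul_assoc, hW, Matrix.one_mul]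

/-- Gershgorin's theorem for an orthogonally diagonalized matrix. -/
lemma exists_abs_sub_le_of_eq_conj_diagonal {S W : Matrix ι ι ℝ} {μ : ι → ℝ} (hW : Wᵀ * W = 1)
    (hS : S = W * diagonal μ * Wᵀ) (i : ι) :
    ∃ k, |μ i - S k k| ≤ ∑ j ∈ Finset.univ.erase k, |S k j| := by
  have hroot : S.charpoly.IsRoot (μ i) := by
    rw [hS, charpoly_orthogonal_conj hW, Matrix.charpoly_diagonal, Polynomial.IsRoot,
      Polynomial.eval_prod]
    exact Finset.prod_eq_zero (Finset.mem_univ i) (by simp)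
  have heig : Module.End.HasEigenvalue (Matrix.toLin' S) (μ i) := by
    rw [Module.End.hasEigenvalue_iff_isRoot_charpoly]
    simpa using hroot
  simpa [Real.dist_eq] using eigenvalue_mem_ball heig

/-- A real symmetric matrix is orthogonally diagonalizable with increasing eigenvalues. -/
lemma exists_monotone_conj_diagonal {k : ℕ} {S : Matrix (Fin k) (Fin k) ℝ} (hS : Sᵀ = S) :
    ∃ (μ : Fin k → ℝ) (W : Matrix (Fin k) (Fin k) ℝ), Monotone μ ∧ Wᵀ * W = 1 ∧
      S = W * diagonal μ * Wᵀ := by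
  have hH : S.IsHermitian := by
    rwa [Matrix.IsHermitian, Matrix.conjTranspose_eq_transpose_of_trivial]
  set U : Matrix (Fin k) (Fin k) ℝ := hH.eigenvectorUnitary.1 
  have hUU : Uᵀ * U = 1 := by
    have := Unitary.coe_star_mul_self hH.eigenvectorUnitary
    rwa [Matrix.star_eq_conjTranspose, Matrix.conjTranspose_eq_transpose_of_trivial] at this
  have hdiag : S = U * diagonal hH.eigenvalues * Uᵀ := by
    have := hH.spectral_theorem
    rw [Unitary.conjStarAlgAut_apply, Matrix.star_eq_conjTranspose,
      Matrix.conjTranspose_eq_transpose_of_trivial] at this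
    simpa using this
  set σ := Tuple.sort hH.eigenvalues
  refine ⟨hH.eigenvalues ∘ σ, U.submatrix id σ, Tuple.monotone_sort _, ?_, ?_⟩
  · rw [Matrix.transpose_submatrix, Matrix.submatrix_mul _ _ _ _ _ Function.bijective_id |>.symm,
      hUU, Matrix.submatrix_one_equiv]
  · rw [← Matrix.submatrix_diagonal_equiv, Matrix.submatrix_mul_equiv, Matrix.transpose_submatrix,
      Matrix.submatrix_mul_equiv, Matrix.submatrix_id_id]
    exact hdiag

end Spectral

/-- The splitting of `Fin n` into its first two elements and the rest. -/
def finTwoSumEquiv {n : ℕ} (hn : 2 < n) : Fin 2 ⊕ Fin (n - 2) ≃ Fin n :=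
  finSumFinEquiv.trans (finCongr (by omega))

lemma finTwoSumEquiv_inl_val {n : ℕ} (hn : 2 < n) (i : Fin 2) :
    (finTwoSumEquiv hn (Sum.inl i)).val = i.val := by
  simp [finTwoSumEquiv]

lemma finTwoSumEquiv_inr_val {n : ℕ} (hn : 2 < n) (j : Fin (n - 2)) :
    (finTwoSumEquiv hn (Sum.inr j)).val = j.val + 2 := by
  simp [finTwoSumEquiv, add_comm]

lemma mk_eq_finTwoSumEquiv_inl {n : ℕ} (hn : 2 < n) (i : Fin 2) (h : i.val < n) :
    (⟨i.val, h⟩ : Fin n) = finTwoSumEquiv hn (Sum.inl i) :=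
  Fin.ext (finTwoSumEquiv_inl_val hn i).symm

lemma mk_eq_finTwoSumEquiv_inr {n : ℕ} (hn : 2 < n) (j : Fin (n - 2)) (h : j.val + 2 < n) :
    (⟨j.val + 2, h⟩ : Fin n) = finTwoSumEquiv hn (Sum.inr j) :=
  Fin.ext (finTwoSumEquiv_inr_val hn j).symm

/-- If the spectrum of `fromBlocks B 0 0 L` is the increasing sequence `l` and the Gershgorin discs
of `B` and `L` are separated by `c`, then `B` carries the first two eigenvalues and `L` the others. -/
lemma exists_conj_diagonal_of_charpoly_fromBlocks {n : ℕ} (hn : 2 < n) {l : Fin n → ℝ}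
    (hl : Monotone l) {B : Matrix (Fin 2) (Fin 2) ℝ} {L : Matrix (Fin (n - 2)) (Fin (n - 2)) ℝ}
    (hB : Bᵀ = B) (hL : Lᵀ = L)
    (hchar : (fromBlocks B 0 0 L).charpoly = ∏ i, (Polynomial.X - Polynomial.C (l i)))
    {c : ℝ} (hBc : ∀ k, B k k + ∑ j ∈ Finset.univ.erase k, |B k j| < c)
    (hLc : ∀ k, c < L k k - ∑ j ∈ Finset.univ.erase k, |L k j|) :
    (∃ W : Matrix (Fin 2) (Fin 2) ℝ, Wᵀ * W = 1 ∧
      B = W * diagonal (fun i => l (finTwoSumEquiv hn (Sum.inl i))) * Wᵀ) ∧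
    ∃ W : Matrix (Fin (n - 2)) (Fin (n - 2)) ℝ, Wᵀ * W = 1 ∧
      L = W * diagonal (fun j => l (finTwoSumEquiv hn (Sum.inr j))) * Wᵀ := by
  obtain ⟨μ, W₁, hμ, hW₁, hB'⟩ := exists_monotone_conj_diagonal hB
  obtain ⟨ν, W₂, hν, hW₂, hL'⟩ := exists_monotone_conj_diagonal hL
  have hμc : ∀ i, μ i < c := fun i => by
    obtain ⟨k, hk⟩ := exists_abs_sub_le_of_eq_conj_diagonal hW₁ hB' i
    linarith [(abs_le.1 hk).2, hBc k]
  have hνc : ∀ j, c < ν j := fun j => by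
    obtain ⟨k, hk⟩ := exists_abs_sub_le_of_eq_conj_diagonal hW₂ hL' j
    linarith [(abs_le.1 hk).1, hLc k]
  set e := finTwoSumEquiv hn with he
  have hmono : Monotone (Sum.elim μ ν ∘ e.symm) := by
    intro p q hpq
    obtain ⟨p, rfl⟩ := e.surjective p
    obtain ⟨q, rfl⟩ := e.surjective q
    simp only [Function.comp_apply, Equiv.symm_apply_apply]
    rcases p with i | i <;> rcases q with j | j <;>
      simp only [he, Fin.le_def, finTwoSumEquiv_inl_val, finTwoSumEquiv_inr_val] at hpq
    · exact hμ hpq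
    · exact ((hμc i).trans (hνc j)).le
    · omega
    · exact hν (by rw [Fin.le_def]; omega)
  have hlam : l = Sum.elim μ ν ∘ e.symm := by
    refine eq_of_monotone_of_prod_X_sub_C_eq hl hmono ?_
    rw [← hchar, Matrix.charpoly_fromBlocks_zero₂₁, ← e.prod_comp, Fintype.prod_sum_type, hB', hL',
      charpoly_orthogonal_conj hW₁, charpoly_orthogonal_conj hW₂, Matrix.charpoly_diagonal,
      Matrix.charpoly_diagonal]
    simp
  subst hlam
  exact ⟨⟨W₁, hW₁, by simpa using hB'⟩, ⟨W₂, hW₂, by simpa using hL'⟩⟩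

lemma contDiffAt_mul_mul_apply {ι E : Type*} [Fintype ι] [NormedAddCommGroup E] [NormedSpace ℝ E]
    {k : WithTop ℕ∞} {F G H : E → Matrix ι ι ℝ} {x : E}
    (hF : ∀ i j, ContDiffAt ℝ k (fun r => F r i j) x)
    (hG : ∀ i j, ContDiffAt ℝ k (fun r => G r i j) x)
    (hH : ∀ i j, ContDiffAt ℝ k (fun r => H r i j) x) (i j : ι) :
    ContDiffAt ℝ k (fun r => (F r * G r * H r) i j) x := by
  simp only [Matrix.mul_apply]
  exact ContDiffAt.sum fun q _ => (ContDiffAt.sum fun p _ => (hF _ _).mul (hG _ _)).mul (hH _ _)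

/-- existence of a C² orthogonal block diagonalization
`Mᵀ A M = B ⊕ Λ` near a point where `λ₂ < λ₃`, with `B` carrying the eigenvalues
`λ₁, λ₂` and `Λ` the eigenvalues `λ₃, …, λₙ`. -/
theorem stmt12 {n : ℕ} (hn : 2 < n)
    (A : ℝ × ℝ → Matrix (Fin n) (Fin n) ℝ)
    (hA : ∀ i j, ContDiff ℝ 2 fun r => A r i j)
    (hAsym : ∀ r, (A r)ᵀ = A r)
    (lam : ℝ × ℝ → Fin n → ℝ)
    (hmono : ∀ r, Monotone (lam r))
    (heig : ∀ r, ∃ V : Matrix (Fin n) (Fin n) ℝ,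
      Vᵀ * V = 1 ∧ A r = V * diagonal (lam r) * Vᵀ)
    (α : ℝ × ℝ)
    (hgap : lam α ⟨1, by omega⟩ < lam α ⟨2, by omega⟩) :
    ∃ Ω : Set (ℝ × ℝ), IsOpen Ω ∧ α ∈ Ω ∧
    ∃ (M : ℝ × ℝ → Matrix (Fin n) (Fin n) ℝ)
      (B : ℝ × ℝ → Matrix (Fin 2) (Fin 2) ℝ)
      (L : ℝ × ℝ → Matrix (Fin (n - 2)) (Fin (n - 2)) ℝ),
      (∀ i j, ContDiffOn ℝ 2 (fun r => M r i j) Ω) ∧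
      (∀ i j, ContDiffOn ℝ 2 (fun r => B r i j) Ω) ∧
      (∀ i j, ContDiffOn ℝ 2 (fun r => L r i j) Ω) ∧
      (∀ r ∈ Ω, (M r)ᵀ * M r = 1) ∧
      (∀ r ∈ Ω, ∀ i j : Fin 2,
        ((M r)ᵀ * A r * M r) ⟨i.val, by have := i.isLt; omega⟩
          ⟨j.val, by have := j.isLt; omega⟩ = B r i j) ∧
      (∀ r ∈ Ω, ∀ i j : Fin (n - 2),
        ((M r)ᵀ * A r * M r) ⟨i.val + 2, by have := i.isLt; omega⟩
          ⟨j.val + 2, by have := j.isLt; omega⟩ = L r i j) ∧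
      (∀ r ∈ Ω, ∀ i j : Fin n,
        (i.val < 2 ∧ 2 ≤ j.val) ∨ (2 ≤ i.val ∧ j.val < 2) →
          ((M r)ᵀ * A r * M r) i j = 0) ∧
      (∀ r ∈ Ω, (B r)ᵀ = B r ∧ ∃ W : Matrix (Fin 2) (Fin 2) ℝ, Wᵀ * W = 1 ∧
        B r = W * diagonal ![lam r ⟨0, by omega⟩, lam r ⟨1, by omega⟩] * Wᵀ) ∧
      (∀ r ∈ Ω, (L r)ᵀ = L r ∧
        ∃ W : Matrix (Fin (n - 2)) (Fin (n - 2)) ℝ, Wᵀ * W = 1 ∧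
        L r = W * diagonal (fun j : Fin (n - 2) =>
          lam r ⟨j.val + 2, by have := j.isLt; omega⟩) * Wᵀ) := by
  set e := finTwoSumEquiv hn with he
  obtain ⟨V, hV, hVα⟩ := heig α
  have hV' : V * Vᵀ = 1 := mul_eq_one_comm.1 hV
  set a : Fin 2 → ℝ := fun i => lam α (e (Sum.inl i))
  set b : Fin (n - 2) → ℝ := fun j => lam α (e (Sum.inr j))
  have haα : ∀ i, a i ≤ lam α ⟨1, by omega⟩ := fun i => by
    refine hmono α ?_
    rw [he, Fin.le_def, finTwoSumEquiv_inl_val]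
    exact Nat.le_of_lt_succ i.isLt
  have hbα : ∀ j, lam α ⟨2, by omega⟩ ≤ b j := fun j => by
    refine hmono α ?_
    rw [he, Fin.le_def, finTwoSumEquiv_inr_val]
    exact Nat.le_add_left 2 j.val
  set A' : ℝ × ℝ → Matrix (Fin 2 ⊕ Fin (n - 2)) (Fin 2 ⊕ Fin (n - 2)) ℝ :=
    fun r => (Vᵀ * A r * V).submatrix e e with hA'
  have hA'c : ∀ x i j, ContDiffAt ℝ 2 (fun r => A' r i j) x := fun x i j =>
    contDiffAt_mul_mul_apply (F := fun _ => Vᵀ) (H := fun _ => V) (fun _ _ => contDiffAt_const)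
      (fun i j => (hA i j).contDiffAt) (fun _ _ => contDiffAt_const) (e i) (e j)
  have hA'α : A' α = fromBlocks (diagonal a) 0 0 (diagonal b) := by
    have h : Vᵀ * A α * V = diagonal (lam α) := by
      rw [hVα]
      calc Vᵀ * (V * diagonal (lam α) * Vᵀ) * V
          = (Vᵀ * V) * diagonal (lam α) * (Vᵀ * V) := by simp only [Matrix.mul_assoc]
        _ = diagonal (lam α) := by simp [hV]
    simp only [hA', h]
    rw [Matrix.submatrix_diagonal_equiv, fromBlocks_diagonal]
    congr 1
    ext (i | j) <;> rfl
  obtain ⟨M, hMc, hMα, hM, hM₂₁⟩ := exists_contDiffAt_orthogonal_toBlocks₂₁_eq_zero (hA'c α) hA'α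
    fun i j => ((haα i).trans_lt (hgap.trans_le (hbα j))).ne
  set N : ℝ × ℝ → Matrix (Fin 2 ⊕ Fin (n - 2)) (Fin 2 ⊕ Fin (n - 2)) ℝ :=
    fun r => (M r)ᵀ * A' r * M r with hN
  have hNc : ∀ i j, ContDiffAt ℝ 2 (fun r => N r i j) α :=
    contDiffAt_mul_mul_apply (fun i j => hMc j i) (hA'c α) hMc
  have hNα : N α = fromBlocks (diagonal a) 0 0 (diagonal b) := by
    simp only [hN, hMα, transpose_one, Matrix.one_mul, Matrix.mul_one, hA'α]
  have hNsym : ∀ r, (N r)ᵀ = N r := fun r => by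
    simp [hN, hA', Matrix.transpose_mul, Matrix.mul_assoc, hAsym]
  have hNchar : ∀ r, (N r).charpoly = ∏ i, (Polynomial.X - Polynomial.C (lam r i)) := fun r => by
    obtain ⟨U, hU, hUr⟩ := heig r
    have hMM : ((M r)ᵀ)ᵀ * (M r)ᵀ = 1 := by
      rw [transpose_transpose]
      exact mul_eq_one_comm.1 (hM r)
    have hVV : (Vᵀ)ᵀ * Vᵀ = 1 := by rwa [transpose_transpose]
    calc (N r).charpoly = ((M r)ᵀ * A' r * ((M r)ᵀ)ᵀ).charpoly := by rw [transpose_transpose]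
      _ = (A' r).charpoly := charpoly_orthogonal_conj hMM _
      _ = (reindex e.symm e.symm (Vᵀ * A r * V)).charpoly := by
        rw [reindex_apply, Equiv.symm_symm]
      _ = (Vᵀ * A r * (Vᵀ)ᵀ).charpoly := by rw [charpoly_reindex, transpose_transpose]
      _ = ∏ i, (Polynomial.X - Polynomial.C (lam r i)) := by
        rw [charpoly_orthogonal_conj hVV, hUr, charpoly_orthogonal_conj hU, charpoly_diagonal]
  obtain ⟨c, hc₁, hc₂⟩ := exists_between hgap
  have hNcont : ∀ i j, ContinuousAt (fun r => N r i j) α := fun i j => (hNc i j).continuousAt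
  have hBc : ∀ᶠ r in nhds α, ∀ k, (N r).toBlocks₁₁ k k +
      ∑ j ∈ Finset.univ.erase k, |(N r).toBlocks₁₁ k j| < c := by
    rw [Filter.eventually_all]
    intro k
    have hcont : ContinuousAt (fun r => (N r).toBlocks₁₁ k k +
        ∑ j ∈ Finset.univ.erase k, |(N r).toBlocks₁₁ k j|) α :=
      (hNcont _ _).add (tendsto_finsetSum _ fun j _ => (hNcont _ _).abs)
    refine hcont.eventually_lt_const ?_
    beta_reduce
    rw [hNα, toBlocks_fromBlocks₁₁, Finset.sum_eq_zero fun j hj => by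
      rw [diagonal_apply_ne' _ (Finset.ne_of_mem_erase hj), abs_zero]]
    simpa using (haα k).trans_lt hc₁
  have hLc : ∀ᶠ r in nhds α, ∀ k, c < (N r).toBlocks₂₂ k k -
      ∑ j ∈ Finset.univ.erase k, |(N r).toBlocks₂₂ k j| := by
    rw [Filter.eventually_all]
    intro k
    have hcont : ContinuousAt (fun r => (N r).toBlocks₂₂ k k -
        ∑ j ∈ Finset.univ.erase k, |(N r).toBlocks₂₂ k j|) α :=
      (hNcont _ _).sub (tendsto_finsetSum _ fun j _ => (hNcont _ _).abs)
    refine hcont.eventually_const_lt ?_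
    beta_reduce
    rw [hNα, toBlocks_fromBlocks₂₂, Finset.sum_eq_zero fun j hj => by
      rw [diagonal_apply_ne' _ (Finset.ne_of_mem_erase hj), abs_zero]]
    simpa using hc₂.trans_le (hbα k)
  have hMev : ∀ᶠ r in nhds α, ∀ i j, ContDiffAt ℝ 2 (fun r => M r i j) r := by
    simp_rw [Filter.eventually_all]
    exact fun i j => (hMc i j).eventually (by decide)
  obtain ⟨Ω, hΩ, hΩo, hαΩ⟩ := eventually_nhds_iff.1 (hM₂₁.and (hBc.and (hLc.and hMev)))
  have hNblocks : ∀ r ∈ Ω, N r = fromBlocks (N r).toBlocks₁₁ 0 0 (N r).toBlocks₂₂ := by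
    intro r hr
    have h₂₁ : (N r).toBlocks₂₁ = 0 := (hΩ r hr).1
    have h₁₂ : (N r).toBlocks₁₂ = 0 := by
      ext i j
      rw [← hNsym]
      exact congrFun (congrFun h₂₁ j) i
    conv_lhs => rw [← fromBlocks_toBlocks (N r), h₁₂, h₂₁]
  have hNΩ : ∀ i j, ContDiffOn ℝ 2 (fun r => N r i j) Ω := fun i j r hr =>
    (contDiffAt_mul_mul_apply (fun i j => (hΩ r hr).2.2.2 j i) (hA'c r)
      (hΩ r hr).2.2.2 i j).contDiffWithinAt
  have hconj : ∀ r, (V * (M r).submatrix e.symm e.symm)ᵀ * A r *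
      (V * (M r).submatrix e.symm e.symm) = (N r).submatrix e.symm e.symm := fun r => by
    have h : Vᵀ * A r * V = (A' r).submatrix e.symm e.symm := by simp [hA']
    calc _ = ((M r).submatrix e.symm e.symm)ᵀ * (Vᵀ * A r * V) *
          (M r).submatrix e.symm e.symm := by simp only [transpose_mul, Matrix.mul_assoc]
      _ = (N r).submatrix e.symm e.symm := by
        rw [h, transpose_submatrix, submatrix_mul_equiv, submatrix_mul_equiv]
  have hspec : ∀ r ∈ Ω, _ := fun r hr =>
    exists_conj_diagonal_of_charpoly_fromBlocks hn (hmono r)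
      (B := (N r).toBlocks₁₁) (L := (N r).toBlocks₂₂)
      (congrArg toBlocks₁₁ (hNsym r)) (congrArg toBlocks₂₂ (hNsym r))
      ((congrArg charpoly (hNblocks r hr)).symm.trans (hNchar r)) (hΩ r hr).2.1 (hΩ r hr).2.2.1
  refine ⟨Ω, hΩo, hαΩ, fun r => V * (M r).submatrix e.symm e.symm, fun r => (N r).toBlocks₁₁,
    fun r => (N r).toBlocks₂₂, ?_, fun i j => hNΩ _ _, fun i j => hNΩ _ _, ?_, ?_, ?_, ?_, ?_, ?_⟩
  · intro i j
    simp only [Matrix.mul_apply]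
    exact ContDiffOn.sum fun k _ => contDiffOn_const.mul
      fun r hr => ((hΩ r hr).2.2.2 _ _).contDiffWithinAt
  · intro r _
    calc _ = ((M r).submatrix e.symm e.symm)ᵀ * (Vᵀ * V) * (M r).submatrix e.symm e.symm := by
          simp only [transpose_mul, Matrix.mul_assoc]
      _ = 1 := by
        rw [hV, Matrix.mul_one, transpose_submatrix, submatrix_mul_equiv, hM, submatrix_one_equiv]
  · intro r _ i j
    rw [hconj, mk_eq_finTwoSumEquiv_inl hn, mk_eq_finTwoSumEquiv_inl hn]
    simp [← he, toBlocks₁₁]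
  · intro r _ i j
    rw [hconj, mk_eq_finTwoSumEquiv_inr hn, mk_eq_finTwoSumEquiv_inr hn]
    simp [← he, toBlocks₂₂]
  · intro r hr i j hij
    rw [hconj, hNblocks r hr]
    obtain ⟨i, rfl⟩ := e.surjective i
    obtain ⟨j, rfl⟩ := e.surjective j
    rcases i with i | i <;> rcases j with j | j <;>
      simp only [he, finTwoSumEquiv_inl_val, finTwoSumEquiv_inr_val] at hij
    · omega
    · simp
    · simp
    · omega
  · intro r hr
    refine ⟨congrArg toBlocks₁₁ (hNsym r), ?_⟩
    obtain ⟨W, hW, hWB⟩ := (hspec r hr).1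
    refine ⟨W, hW, hWB.trans ?_⟩
    congr 3
    ext i
    fin_cases i <;> exact congrArg (lam r) (Fin.ext (finTwoSumEquiv_inl_val hn _))
  · intro r hr
    refine ⟨congrArg toBlocks₂₂ (hNsym r), ?_⟩
    simpa only [mk_eq_finTwoSumEquiv_inr hn] using (hspec r hr).2
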